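/- Let g be a finite-dimensional reductive Lie algebra over a field of characteristic zero with a nondegenerate trace form, and let p, q ≤ g be parabolic subalgebras (self-normalizing subalgebras whose orthogonal complement equals their nilpotent radical). If p^⊥ ⊆ q (equivalently q^⊥ ⊆ p), then p ∩ q is a parabolic subalgebra of g. -/

import Mathlib

/-- A finite-dimensional representation of a Lie algebra `L` over `K`. -/
structure FinDimRep (K L : Type) [Field K] [LieRing L] [LieAlgebra K L] : Type 1 where
  carrier : Type
  [isAddCommGroup : AddCommGroup carrier]
  [isModule : Module K carrier]
  [isLieRingModule : LieRingModule L carrier]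
  [isLieModule : LieModule K L carrier]
  [isFinite : FiniteDimensional K carrier]

attribute [instance] FinDimRep.isAddCommGroup FinDimRep.isModule FinDimRep.isLieRingModule
  FinDimRep.isLieModule FinDimRep.isFinite

/-- Orthogonal complement of a subspace with respect to a bilinear form. -/
def perp {K L : Type} [Field K] [LieRing L] [LieAlgebra K L]
    (B : LinearMap.BilinForm K L) (p : Submodule K L) : Submodule K L where
  carrier := {x : L | ∀ y ∈ p, B x y = 0}
  zero_mem' := by intro y hy; simp
  add_mem' := by
    intro u v hu hv y hy
    simp [hu y hy, hv y hy]
  smul_mem' := by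
    intro c u hu y hy
    simp [hu y hy]

/-- A subalgebra `p` of a reductive Lie algebra with admissible form `B` is
parabolic iff `p^⊥ ⊆ p` and `p` is self-normalizing (paper, Theorem 3.4 (4)). -/
def IsParabolic {K L : Type} [Field K] [LieRing L] [LieAlgebra K L]
    (B : LinearMap.BilinForm K L) (p : LieSubalgebra K L) : Prop :=
  perp B p.toSubmodule ≤ p.toSubmodule ∧ p.normalizer = p

/-!
Nondegeneracy gives `(p ∩ q)^⊥ = p^⊥ + q^⊥`, which lies in `p ∩ q` because `p^⊥ ⊆ q` is equivalent
to `q^⊥ ⊆ p`. Self-normalization is replaced by a condition that is stable under such sums: a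
subalgebra `p` containing `p^⊥` is self-normalizing iff every element of `p^⊥` acts nilpotently on
the representation `V` defining the trace form.

* If `p` is self-normalizing, then `p^⊥ = [p, p^⊥]`. The trace form vanishes on the ideal `I = p^⊥`
  of `p`, so `[I, I]` acts nilpotently on `V` by Cartan's criterion. For `x ∈ p` and `y, z ∈ I` we
  have `tr (z ^ k [x, y]) = tr (x [y, z ^ k])`, and this vanishes because `[y, z ^ k]` lies in the
  associative ideal generated by `[I, I]`. So all powers of an element of `[p, I]` are traceless,
  and in characteristic zero such an element is nilpotent.
* If `p^⊥` acts nilpotently, then `tr (x y) = 0` for all `y ∈ p^⊥` and all `x` normalizing `p`,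
  because `p^⊥` is an ideal of the normalizer. So the normalizer lies in `p^⊥⊥ = p`.

Finally `p^⊥` and `q^⊥` are ideals of `p ∩ q`, and a sum of two ideals acting nilpotently acts
nilpotently.
-/

open LieModule Module Polynomial

lemma trace_aeval_eq_zero_of_X_dvd {R M : Type*} [CommRing R] [AddCommGroup M] [Module R M]
    {f : End R M} (hf : ∀ k, LinearMap.trace R M (f ^ (k + 1)) = 0)
    {g : R[X]} (hg : X ∣ g) : LinearMap.trace R M (aeval f g) = 0 := by
  obtain ⟨g, rfl⟩ := hg
  rw [map_mul, aeval_X, aeval_eq_sum_range, Finset.mul_sum, map_sum]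
  refine Finset.sum_eq_zero fun k _ => ?_
  rw [mul_smul_comm, ← pow_succ', map_smul, hf, smul_zero]

theorem isNilpotent_of_forall_trace_pow_eq_zero {K V : Type*} [Field K] [CharZero K]
    [AddCommGroup V] [Module K V] [FiniteDimensional K V] {f : End K V}
    (hf : ∀ k, LinearMap.trace K V (f ^ (k + 1)) = 0) : IsNilpotent f := by
  obtain ⟨q, hq, hXq⟩ := exists_eq_pow_rootMultiplicity_mul_and_not_dvd (minpoly K f)
    (minpoly.ne_zero_of_finite K f) 0
  set n := (minpoly K f).rootMultiplicity 0
  rw [C_0, sub_zero] at hq hXq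
  have hfq : aeval f (X ^ n * q) = 0 := by rw [← hq, minpoly.aeval]
  obtain ⟨a, b, hab⟩ : IsCoprime (X ^ (n + 1)) q :=
    (irreducible_X.coprime_iff_not_dvd.2 hXq).pow_left
  -- `e` is the projection onto the summand of `V` on which `f` is invertible, along `ker (f ^ n)`.
  set e := aeval f (a * X ^ (n + 1))
  have he_add : e + aeval f (b * q) = 1 := by rw [← map_add, hab, map_one]
  have he_mul : e * aeval f (b * q) = 0 := by
    rw [← map_mul, show a * X ^ (n + 1) * (b * q) = a * X * b * (X ^ n * q) by ring, map_mul, hfq,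
      mul_zero]
  have he_idem : IsIdempotentElem e := by
    rw [IsIdempotentElem, ← add_zero (e * e), ← he_mul, ← mul_add, he_add, mul_one]
  have he : e = 0 := LinearMap.IsIdempotentElem.eq_zero_of_trace_eq_zero he_idem <|
    trace_aeval_eq_zero_of_X_dvd hf ((dvd_pow_self X n.succ_ne_zero).mul_left a)
  refine ⟨n, ?_⟩
  calc f ^ n = f ^ n * aeval f (b * q) := by
        rw [← zero_add (aeval f (b * q)), ← he, he_add, mul_one]
    _ = aeval f (b * (X ^ n * q)) := by rw [mul_left_comm b, map_mul _ (X ^ n), map_pow, aeval_X]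
    _ = 0 := by rw [map_mul, hfq, mul_zero]

section Ideals
variable {R L M : Type*} [CommRing R] [LieRing L] [LieAlgebra R L] [AddCommGroup M] [Module R M]
  [LieRingModule L M]

lemma iterate_sup_lie_le (I J : LieIdeal R L) (N : LieSubmodule R L M) (m : ℕ) :
    (fun P => ⁅I ⊔ J, P⁆)^[m] N ≤ ⁅I, N⁆ ⊔ J.lcs M m := by
  have le_self (k : ℕ) : (fun P => ⁅I ⊔ J, P⁆)^[k] N ≤ N := by
    induction k with
    | zero => rfl
    | succ k ih =>
      rw [Function.iterate_succ_apply']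
      exact (LieSubmodule.lie_le_right _ _).trans ih
  induction m with
  | zero => simp
  | succ m ih =>
    rw [Function.iterate_succ_apply', LieSubmodule.sup_lie, LieIdeal.lcs_succ]
    refine sup_le ((LieSubmodule.mono_lie_right I (le_self m)).trans le_sup_left) ?_
    refine (LieSubmodule.mono_lie_right J ih).trans ?_
    rw [LieSubmodule.lie_sup]
    exact sup_le_sup_right (LieSubmodule.lie_le_right _ _) _

lemma lcs_sup_mul_le {I J : LieIdeal R L} {m : ℕ} (hm : J.lcs M m = ⊥) (k : ℕ) :
    (I ⊔ J).lcs M (m * k) ≤ I.lcs M k := by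
  induction k with
  | zero => simp
  | succ k ih =>
    rw [mul_add_one, add_comm, LieIdeal.lcs, Function.iterate_add_apply]
    refine (iterate_sup_lie_le I J _ m).trans ?_
    rw [hm, sup_bot_eq, LieIdeal.lcs_succ]
    exact LieSubmodule.mono_lie_right I ih

variable [LieModule R L M]

lemma isNilpotent_iff_exists_lcs_eq_bot (I : LieIdeal R L) :
    LieModule.IsNilpotent I M ↔ ∃ k, I.lcs M k = ⊥ := by
  simp_rw [LieModule.isNilpotent_iff R I M, ← LieSubmodule.toSubmodule_eq_bot, I.coe_lcs_eq]

theorem isNilpotent_lieIdeal_sup {I J : LieIdeal R L} (hI : LieModule.IsNilpotent I M)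
    (hJ : LieModule.IsNilpotent J M) : LieModule.IsNilpotent ↥(I ⊔ J) M := by
  obtain ⟨k, hk⟩ := (isNilpotent_iff_exists_lcs_eq_bot I).1 hI
  obtain ⟨m, hm⟩ := (isNilpotent_iff_exists_lcs_eq_bot J).1 hJ
  exact (isNilpotent_iff_exists_lcs_eq_bot _).2
    ⟨m * k, eq_bot_iff.2 ((lcs_sup_mul_le hm k).trans hk.le)⟩

lemma apply_mem_of_mem_adjoin_range_toEnd {a : End R M}
    (ha : a ∈ Algebra.adjoin R (Set.range (toEnd R L M))) (N : LieSubmodule R L M) {v : M}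
    (hv : v ∈ N) : a v ∈ N := by
  induction ha using Algebra.adjoin_induction generalizing v with
  | mem _ h => obtain ⟨x, rfl⟩ := h; exact N.lie_mem hv
  | algebraMap r => exact N.smul_mem r hv
  | add _ _ _ _ ha hb => exact N.add_mem (ha hv) (hb hv)
  | mul _ _ _ _ ha hb => exact ha (hb hv)

lemma toEnd_mem_adjoin (x : L) : toEnd R L M x ∈ Algebra.adjoin R (Set.range (toEnd R L M)) :=
  Algebra.subset_adjoin ⟨x, rfl⟩

lemma isNilpotent_mul_toEnd {I : LieIdeal R L} (hI : LieModule.IsNilpotent I M) {a : End R M}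
    (ha : a ∈ Algebra.adjoin R (Set.range (toEnd R L M))) {y : L} (hy : y ∈ I) :
    IsNilpotent (a * toEnd R L M y) := by
  obtain ⟨k, hk⟩ := (isNilpotent_iff_exists_lcs_eq_bot I).1 hI
  have pow_mem_lcs (v : M) (j : ℕ) : ((a * toEnd R L M y) ^ j) v ∈ I.lcs M j := by
    induction j with
    | zero => simp
    | succ j ih =>
      rw [pow_succ', End.mul_apply, LieIdeal.lcs_succ]
      exact apply_mem_of_mem_adjoin_range_toEnd ha _ (LieSubmodule.lie_mem_lie hy ih)
  exact ⟨k, LinearMap.ext fun v => by simpa [hk] using pow_mem_lcs v k⟩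

lemma trace_mul_toEnd_eq_zero [IsReduced R] {I : LieIdeal R L}
    (hI : LieModule.IsNilpotent I M) {a : End R M}
    (ha : a ∈ Algebra.adjoin R (Set.range (toEnd R L M))) {y : L} (hy : y ∈ I) :
    LinearMap.trace R M (a * toEnd R L M y) = 0 :=
  (LinearMap.isNilpotent_trace_of_isNilpotent (isNilpotent_mul_toEnd hI ha hy)).eq_zero

lemma trace_mul_lie_toEnd_pow_eq_zero [IsReduced R] {I : LieIdeal R L}
    (hI : LieModule.IsNilpotent ↥⁅I, I⁆ M) {a : End R M}
    (ha : a ∈ Algebra.adjoin R (Set.range (toEnd R L M))) {y z : L} (hy : y ∈ I) (hz : z ∈ I)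
    (k : ℕ) : LinearMap.trace R M (a * ⁅toEnd R L M y, toEnd R L M z ^ k⁆) = 0 := by
  induction k generalizing a with
  | zero => simp [Ring.lie_def]
  | succ k ih =>
    have lie_pow_succ : ⁅toEnd R L M y, toEnd R L M z ^ (k + 1)⁆ =
        ⁅toEnd R L M y, toEnd R L M z ^ k⁆ * toEnd R L M z +
          toEnd R L M z ^ k * toEnd R L M ⁅y, z⁆ := by
      simp only [LieHom.map_lie, Ring.lie_def, pow_succ]
      noncomm_ring
    have hz' := toEnd_mem_adjoin (R := R) (M := M) z
    rw [lie_pow_succ, mul_add, map_add, ← mul_assoc, ← mul_assoc, LinearMap.trace_mul_comm,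
      ← mul_assoc, ih (mul_mem hz' ha), zero_add]
    exact trace_mul_toEnd_eq_zero hI (mul_mem ha (pow_mem hz' k)) (LieSubmodule.lie_mem_lie hy hz)

lemma trace_toEnd_pow_mul_toEnd_eq_zero [IsReduced R] {I : LieIdeal R L}
    (hI : LieModule.IsNilpotent ↥⁅I, I⁆ M) {z w : L} (hz : z ∈ I)
    (hw : w ∈ ⁅(⊤ : LieIdeal R L), I⁆) (k : ℕ) :
    LinearMap.trace R M (toEnd R L M z ^ k * toEnd R L M w) = 0 := by
  rw [← LieSubmodule.mem_toSubmodule, LieSubmodule.lieIdeal_oper_eq_linear_span'] at hw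
  induction hw using Submodule.span_induction with
  | mem w hw =>
    obtain ⟨x, -, y, hy, rfl⟩ := hw
    calc LinearMap.trace R M (toEnd R L M z ^ k * toEnd R L M ⁅x, y⁆)
        = LinearMap.trace R M (toEnd R L M x * ⁅toEnd R L M y, toEnd R L M z ^ k⁆) := by
          simp only [LieHom.map_lie, Ring.lie_def, mul_sub, map_sub]
          rw [LinearMap.trace_mul_comm R _ (_ * _), mul_assoc, ← mul_assoc (_ ^ k),
            LinearMap.trace_mul_comm R (_ ^ k * _)]
      _ = 0 := trace_mul_lie_toEnd_pow_eq_zero hI (toEnd_mem_adjoin x) hy hz k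
  | zero => simp
  | add u v _ _ hu hv => rw [map_add, mul_add, map_add, hu, hv, add_zero]
  | smul c u _ hu => rw [map_smul, mul_smul_comm, map_smul, hu, smul_zero]
end Ideals

section Cartan
variable {K L V : Type*} [Field K] [CharZero K] [LieRing L] [LieAlgebra K L] [AddCommGroup V]
  [Module K V] [LieRingModule L V] [LieModule K L V] [FiniteDimensional K V]

lemma isNilpotent_lie_self_of_traceForm_eq_zero {I : LieIdeal K L} (h : traceForm K I V = 0) :
    LieModule.IsNilpotent ↥⁅I, I⁆ V := by
  have hder := isNilpotent_derivedSeries_of_traceForm_eq_zero h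
  rw [isNilpotent_iff_forall' (R := K)] at hder ⊢
  rintro ⟨x, hx⟩
  refine hder ⟨⟨x, LieSubmodule.lie_le_left I I hx⟩, ?_⟩
  rwa [LieIdeal.derivedSeries_eq_derivedSeriesOfIdeal_comap, LieIdeal.mem_comap]

theorem isNilpotent_toEnd_of_mem_top_lie {I : LieIdeal K L} (h : traceForm K I V = 0) {z : L}
    (hz : z ∈ ⁅(⊤ : LieIdeal K L), I⁆) : IsNilpotent (toEnd K L V z) := by
  refine isNilpotent_of_forall_trace_pow_eq_zero fun k => ?_
  rw [pow_succ]
  exact trace_toEnd_pow_mul_toEnd_eq_zero (isNilpotent_lie_self_of_traceForm_eq_zero h)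
    (LieSubmodule.lie_le_right _ _ hz) hz k
end Cartan

section Perp
variable {K L : Type} [Field K] [LieRing L] [LieAlgebra K L] {B : LinearMap.BilinForm K L}

lemma perp_anti {U W : Submodule K L} (h : U ≤ W) : perp B W ≤ perp B U :=
  fun _ hx y hy => hx y (h hy)

lemma perp_sup (U W : Submodule K L) : perp B (U ⊔ W) = perp B U ⊓ perp B W := by
  refine le_antisymm (le_inf (perp_anti le_sup_left) (perp_anti le_sup_right)) ?_
  rintro x ⟨hxU, hxW⟩ y hy
  obtain ⟨u, hu, w, hw, rfl⟩ := Submodule.mem_sup.1 hy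
  rw [map_add, hxU u hu, hxW w hw, add_zero]

lemma perp_eq_orthogonal (hrefl : B.IsRefl) (W : Submodule K L) : perp B W = B.orthogonal W := by
  ext x
  exact forall₂_congr fun y _ => by rw [hrefl.eq_iff]

lemma lie_mem_perp (hinv : B.lieInvariant L) {p : LieSubalgebra K L} {x y : L}
    (hx : x ∈ p.normalizer) (hy : y ∈ perp B p.toSubmodule) : ⁅x, y⁆ ∈ perp B p.toSubmodule := by
  intro z hz
  rw [hinv, hy _ ((p.mem_normalizer_iff x).1 hx z hz), neg_zero]

/-- The orthogonal complement `p^⊥` as an ideal of a subalgebra `a` containing `p^⊥` and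
normalizing `p`; without `p^⊥ ≤ a` it is `p^⊥ ⊓ a`. -/
def perpIdeal (hinv : B.lieInvariant L) {a p : LieSubalgebra K L} (h : a ≤ p.normalizer) :
    LieIdeal K a where
  __ := (perp B p.toSubmodule).comap a.toSubmodule.subtype
  lie_mem {x _} hy := lie_mem_perp hinv (h x.2) hy

section Nondegenerate
variable [FiniteDimensional K L]

lemma perp_perp (hnd : B.Nondegenerate) (hrefl : B.IsRefl) (W : Submodule K L) :
    perp B (perp B W) = W := by
  rw [perp_eq_orthogonal hrefl, perp_eq_orthogonal hrefl,
    LinearMap.BilinForm.orthogonal_orthogonal hnd hrefl]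

lemma perp_inf (hnd : B.Nondegenerate) (hrefl : B.IsRefl) (U W : Submodule K L) :
    perp B (U ⊓ W) = perp B U ⊔ perp B W := by
  rw [← perp_perp hnd hrefl (perp B U ⊔ perp B W), perp_sup, perp_perp hnd hrefl,
    perp_perp hnd hrefl]

lemma perp_le_map_top_lie (hnd : B.Nondegenerate) (hrefl : B.IsRefl) (hinv : B.lieInvariant L)
    {p : LieSubalgebra K L} (hp : IsParabolic B p) :
    perp B p.toSubmodule ≤ (⁅(⊤ : LieIdeal K p), perpIdeal hinv p.le_normalizer⁆).toSubmodule.map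
      p.toSubmodule.subtype := by
  rw [← perp_perp hnd hrefl (Submodule.map _ _)]
  refine perp_anti fun u hu => ?_
  suffices ∀ x ∈ p, ⁅x, u⁆ ∈ perp B (perp B p.toSubmodule) by
    rw [perp_perp hnd hrefl] at this
    exact hp.2.le ((p.mem_normalizer_iff' u).2 this)
  intro x hx y hy
  have hxy : ⁅(⟨x, hx⟩ : p), (⟨y, hp.1 hy⟩ : p)⁆ ∈
      ⁅(⊤ : LieIdeal K p), perpIdeal hinv p.le_normalizer⁆ :=
    LieSubmodule.lie_mem_lie (LieSubmodule.mem_top _) hy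
  rw [hinv, hu ⁅x, y⁆ ⟨_, hxy, rfl⟩, neg_zero]
end Nondegenerate
end Perp

section Parabolic
variable {K L : Type} {V : Type*} [Field K] [LieRing L] [LieAlgebra K L] [AddCommGroup V]
  [Module K V] [FiniteDimensional K V] [LieRingModule L V] [LieModule K L V]
  {p q : LieSubalgebra K L}

lemma isNilpotent_perpIdeal {a : LieSubalgebra K L} (ha : a ≤ p.normalizer)
    (hnil : ∀ y ∈ perp (traceForm K L V) p.toSubmodule, IsNilpotent (toEnd K L V y)) :
    LieModule.IsNilpotent (perpIdeal (traceForm_lieInvariant K L V) ha) V :=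
  (isNilpotent_iff_forall' (R := K)).2 fun y => hnil _ y.2

lemma isNilpotent_toEnd_of_mem_perp_sup {a : LieSubalgebra K L}
    (hap : a ≤ p.normalizer) (haq : a ≤ q.normalizer)
    (hpa : perp (traceForm K L V) p.toSubmodule ≤ a.toSubmodule)
    (hqa : perp (traceForm K L V) q.toSubmodule ≤ a.toSubmodule)
    (hp : ∀ y ∈ perp (traceForm K L V) p.toSubmodule, IsNilpotent (toEnd K L V y))
    (hq : ∀ y ∈ perp (traceForm K L V) q.toSubmodule, IsNilpotent (toEnd K L V y)) {y : L}
    (hy : y ∈ perp (traceForm K L V) p.toSubmodule ⊔ perp (traceForm K L V) q.toSubmodule) :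
    IsNilpotent (toEnd K L V y) := by
  have hinv := traceForm_lieInvariant K L V
  obtain ⟨u, hu, v, hv, rfl⟩ := Submodule.mem_sup.1 hy
  have hu' : (⟨u, hpa hu⟩ : a) ∈ perpIdeal hinv hap := hu
  have hv' : (⟨v, hqa hv⟩ : a) ∈ perpIdeal hinv haq := hv
  have huv := add_mem (LieSubmodule.mem_sup_left hu') (LieSubmodule.mem_sup_right hv')
  have hsup :=
    isNilpotent_lieIdeal_sup (isNilpotent_perpIdeal hap hp) (isNilpotent_perpIdeal haq hq)
  rw [isNilpotent_iff_forall' (R := K)] at hsup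
  exact hsup ⟨⟨u, hpa hu⟩ + ⟨v, hqa hv⟩, huv⟩

variable [FiniteDimensional K L]

lemma normalizer_eq_self_of_isNilpotent (hnd : (traceForm K L V).Nondegenerate)
    (hle : perp (traceForm K L V) p.toSubmodule ≤ p.toSubmodule)
    (hnil : ∀ y ∈ perp (traceForm K L V) p.toSubmodule, IsNilpotent (toEnd K L V y)) :
    p.normalizer = p := by
  refine le_antisymm (fun x hx => ?_) p.le_normalizer
  rw [← LieSubalgebra.mem_toSubmodule,
    ← perp_perp hnd (traceForm_isSymm K L V).isRefl p.toSubmodule]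
  exact fun y hy => trace_mul_toEnd_eq_zero (isNilpotent_perpIdeal le_rfl hnil)
    (toEnd_mem_adjoin ⟨x, hx⟩) (y := ⟨y, p.le_normalizer (hle hy)⟩) hy

lemma IsParabolic.isNilpotent_toEnd [CharZero K] (hnd : (traceForm K L V).Nondegenerate)
    (hp : IsParabolic (traceForm K L V) p) {y : L}
    (hy : y ∈ perp (traceForm K L V) p.toSubmodule) : IsNilpotent (toEnd K L V y) := by
  obtain ⟨z, hz, rfl⟩ := perp_le_map_top_lie hnd (traceForm_isSymm K L V).isRefl
    (traceForm_lieInvariant K L V) hp hy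
  refine isNilpotent_toEnd_of_mem_top_lie (L := p) ?_ hz
  ext u v
  exact u.2 v (hp.1 v.2)

theorem isParabolic_traceForm_iff [CharZero K] (hnd : (traceForm K L V).Nondegenerate) :
    IsParabolic (traceForm K L V) p ↔ perp (traceForm K L V) p.toSubmodule ≤ p.toSubmodule ∧
      ∀ y ∈ perp (traceForm K L V) p.toSubmodule, IsNilpotent (toEnd K L V y) :=
  ⟨fun hp => ⟨hp.1, fun _ => hp.isNilpotent_toEnd hnd⟩,
    fun h => ⟨h.1, normalizer_eq_self_of_isNilpotent hnd h.1 h.2⟩⟩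
end Parabolic

/-- if `p, q` are parabolic subalgebras of a reductive Lie algebra with
admissible (nondegenerate) trace form `B` and `p^⊥ ⊆ q`, then `p ∩ q` is parabolic. -/
theorem costandard_inter_parabolic
    (K L : Type) [Field K] [CharZero K] [LieRing L] [LieAlgebra K L]
    [FiniteDimensional K L]
    (B : LinearMap.BilinForm K L)
    (htrace : ∃ R : FinDimRep K L, B = LieModule.traceForm K L R.carrier)
    (hnd : B.Nondegenerate)
    (p q : LieSubalgebra K L)
    (hp : IsParabolic B p) (hq : IsParabolic B q)
    (hpq : perp B p.toSubmodule ≤ q.toSubmodule) :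
    IsParabolic B (p ⊓ q) := by
  obtain ⟨R, rfl⟩ := htrace
  have hrefl := (traceForm_isSymm K L R.carrier).isRefl
  have hqp : perp (traceForm K L R.carrier) q.toSubmodule ≤ p.toSubmodule := by
    rw [← perp_perp hnd hrefl p.toSubmodule]
    exact perp_anti hpq
  have hperp := perp_inf hnd hrefl p.toSubmodule q.toSubmodule
  rw [isParabolic_traceForm_iff hnd, LieSubalgebra.inf_toSubmodule, hperp]
  refine ⟨le_inf (sup_le hp.1 hqp) (sup_le hpq hq.1), fun y => ?_⟩
  exact isNilpotent_toEnd_of_mem_perp_sup (a := p ⊓ q)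
    (inf_le_left.trans p.le_normalizer) (inf_le_right.trans q.le_normalizer)
    (le_inf hp.1 hpq) (le_inf hqp hq.1)
    (fun _ => hp.isNilpotent_toEnd hnd) (fun _ => hq.isNilpotent_toEnd hnd)
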